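/- arXiv:2110.00237 — 2 statements merged into one kernel-verified Lean document; each statement's English description precedes it below -/
import Mathlib

section
/- Let a, b, c, d be nonnegative integers with a > 0, c > 0, and ad ≠ bc. Then there exists a strictly increasing sequence (n_k) of positive integers such that for every s ∈ [-1,1], σ_s(a·n_k+b) / σ_s(c·n_k+d) → 0 as k → ∞, and there exists a strictly increasing sequence (m_k) of positive integers such that for every s ∈ [-1,1], σ_s(a·m_k+b) / σ_s(c·m_k+d) → ∞ as k → ∞. In particular, for every real s with |s| ≤ 1, liminf_{n→∞} σ_s(an+b)/σ_s(cn+d) = 0 and limsup_{n→∞} σ_s(an+b)/σ_s(cn+d) = ∞. -/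
/-!
Interchanging `(a, b)` and `(c, d)` inverts the quotient, so it suffices to make
`σ_s(cn+d) / σ_s(an+b)` arbitrarily large, uniformly in `s ∈ [-1, 1]`, for arbitrarily large `n`.

The identity `σ_s(m) = m^s σ_{-s}(m)`, together with the boundedness of `(an+b)/(cn+d)`, reduces this
to exponents `-t` with `t ∈ [0, 1]`. For these, `σ_{-t}(m)` is at most the number of divisors of `m`,
and at least `σ_{-1}(M)` for every `M ∣ m`. So it is enough to find `n` such that `an+b` has a bounded
number of divisors while `M ∣ cn+d` for some `M` with `σ_{-1}(M)` large.

Put `K = c |ad - bc|`. The product `M = ∏_{i<N} (iK + 1)` satisfies `M ≡ 1 (mod K)`, and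
`σ_{-1}(M) ≥ ∑_{i<N} 1/(iK+1)` is unbounded because the harmonic series diverges
(`exists_modulus`). Since `M` is prime to `c`, the condition `M ∣ cn+d` is a congruence for `n` modulo
`M`; since `M` is prime to `ad - bc`, on that progression `gcd(an+b, aM)` is the constant
`g = gcd(a, b)`, and Dirichlet's theorem yields infinitely many `n` with `an+b = g p`, `p` prime
(`exists_prime_value`). Such a number has at most `2 τ(g)` divisors.
-/

open Filter Topology

/-- `σ_s(n) = ∑_{d ∣ n} d^s` over the positive divisors of `n`. -/
noncomputable def sigmaR (s : ℝ) (n : ℕ) : ℝ := ∑ d ∈ n.divisors, (d : ℝ) ^ s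

lemma sigmaR_pos (s : ℝ) {n : ℕ} (hn : 0 < n) : 0 < sigmaR s n := by
  unfold sigmaR
  apply Finset.sum_pos
  · intro x hx
    have := Nat.pos_of_mem_divisors hx
    positivity
  · exact ⟨1, by simp; omega⟩

lemma sigmaR_nonneg (s : ℝ) (n : ℕ) : 0 ≤ sigmaR s n :=
  Finset.sum_nonneg fun x _ => by positivity

lemma sigmaR_eq_rpow_mul (s : ℝ) {n : ℕ} (hn : 0 < n) :
    sigmaR s n = (n : ℝ) ^ s * sigmaR (-s) n := by
  unfold sigmaR
  rw [← Nat.sum_div_divisors n (fun d => (d : ℝ) ^ s), Finset.mul_sum]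
  refine Finset.sum_congr rfl fun x hx => ?_
  have hx0 := Nat.pos_of_mem_divisors hx
  have hx0' : (x : ℝ) ≠ 0 := by positivity
  rw [Nat.cast_div (Nat.dvd_of_mem_divisors hx) hx0', Real.div_rpow (by positivity) (by positivity),
    Real.rpow_neg (by positivity), div_eq_mul_inv]

lemma sigmaR_le_card {s : ℝ} (hs : s ≤ 0) (n : ℕ) : sigmaR s n ≤ (n.divisors.card : ℝ) := by
  unfold sigmaR
  rw [Finset.card_eq_sum_ones, Nat.cast_sum]
  refine Finset.sum_le_sum fun x hx => ?_
  have : (1 : ℝ) ≤ x := by exact_mod_cast Nat.pos_of_mem_divisors hx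
  simpa using Real.rpow_le_one_of_one_le_of_nonpos this hs

lemma sigmaR_neg_one_le {s : ℝ} (hs : -1 ≤ s) {M n : ℕ} (hn : 0 < n) (h : M ∣ n) :
    sigmaR (-1) M ≤ sigmaR s n := by
  unfold sigmaR
  calc ∑ d ∈ M.divisors, (d : ℝ) ^ (-1 : ℝ) ≤ ∑ d ∈ M.divisors, (d : ℝ) ^ s := by
        refine Finset.sum_le_sum fun x hx => ?_
        have : (1 : ℝ) ≤ x := by exact_mod_cast Nat.pos_of_mem_divisors hx
        exact Real.rpow_le_rpow_of_exponent_le this hs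
    _ ≤ _ := Finset.sum_le_sum_of_subset_of_nonneg (Nat.divisors_subset_of_dvd hn.ne' h)
        fun x _ _ => by positivity

/-- The witness is `∏_{i<N} (iK + 1)`, whose divisors include the `N` distinct numbers `iK + 1`. -/
lemma exists_modulus {K : ℕ} (hK : 0 < K) (B : ℝ) :
    ∃ M : ℕ, 0 < M ∧ M ≡ 1 [MOD K] ∧ B ≤ sigmaR (-1) M := by
  obtain ⟨N, hN⟩ := (Real.tendsto_sum_range_one_div_nat_succ_atTop.eventually_ge_atTop
    (K * B)).exists
  have hM : 0 < ∏ i ∈ Finset.range N, (i * K + 1) := Finset.prod_pos fun i _ => by positivity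
  refine ⟨∏ i ∈ Finset.range N, (i * K + 1), hM, ?_, ?_⟩
  · clear hM hN
    induction N with
    | zero => simp; rfl
    | succ m ih =>
      rw [Finset.prod_range_succ]
      have : m * K + 1 ≡ 1 [MOD K] := by simp [Nat.ModEq]
      simpa using ih.mul this
  · have hK' : (0 : ℝ) < K := by exact_mod_cast hK
    have hK1 : (1 : ℝ) ≤ K := by exact_mod_cast hK
    calc B ≤ ∑ i ∈ Finset.range N, (((i * K + 1 : ℕ) : ℝ)) ^ (-1 : ℝ) := by
          refine le_of_mul_le_mul_left (hN.trans ?_) hK'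
          rw [Finset.mul_sum]
          refine Finset.sum_le_sum fun i _ => ?_
          rw [Real.rpow_neg_one, ← div_eq_mul_inv, div_le_div_iff₀ (by positivity) (by positivity)]
          push_cast
          nlinarith
      _ = ∑ x ∈ (Finset.range N).image (fun i => i * K + 1), (x : ℝ) ^ (-1 : ℝ) := by
          rw [Finset.sum_image]
          intro i _ j _ h
          exact Nat.eq_of_mul_eq_mul_right hK (by simpa using h)
      _ ≤ _ := by
          unfold sigmaR
          refine Finset.sum_le_sum_of_subset_of_nonneg ?_ fun x _ _ => by positivity
          intro x hx
          obtain ⟨i, hi, rfl⟩ := Finset.mem_image.1 hx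
          exact Nat.mem_divisors.2 ⟨Finset.dvd_prod_of_mem (fun i => i * K + 1) hi, Nat.ne_of_gt hM⟩

/-- Dirichlet's theorem on the progression of those `n` with `M ∣ cn + d`. -/
lemma exists_prime_value {a b c d M : ℕ} (ha : 0 < a) (hM : 0 < M)
    (h1 : M ≡ 1 [MOD c * ((a * d : ℤ) - b * c).natAbs]) (N : ℕ) :
    ∃ n > N, M ∣ c * n + d ∧ ∃ p, p.Prime ∧ a * n + b = a.gcd b * p := by
  obtain ⟨L, hL⟩ : ∃ L, M = c * L + 1 := by
    have h2 : M ≡ 1 [MOD c] := h1.of_mul_right _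
    obtain ⟨L, hL⟩ := (Nat.modEq_iff_dvd' hM).1 h2.symm
    exact ⟨L, by omega⟩
  -- `n₀ = dL` solves `c n₀ + d ≡ 0 (mod M)`, because `cL ≡ -1 (mod M)`.
  have hn0 : c * (d * L) + d = d * M := by rw [hL]; ring
  have hcop : Nat.Coprime (a * (d * L) + b) M := by
    refine Nat.Coprime.symm (Nat.coprime_of_dvd fun q hq hqM hqA => ?_)
    have hqK : q ∣ ((a * d : ℤ) - b * c).natAbs := by
      rw [← Int.natCast_dvd]
      have e : (a * d : ℤ) - b * c = a * d * M - c * ((a * (d * L) + b : ℕ) : ℤ) := by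
        rw [hL]; push_cast; ring
      rw [e]
      exact dvd_sub (Dvd.dvd.mul_left (by exact_mod_cast hqM) _)
        (Dvd.dvd.mul_left (by exact_mod_cast hqA) _)
    have h3 : M ≡ 1 [MOD q] := h1.of_dvd (hqK.mul_left c)
    have h4 : q ∣ 1 := (Nat.modEq_zero_iff_dvd.1 (h3.symm.trans (Nat.modEq_zero_iff_dvd.2 hqM)))
    exact hq.one_lt.ne' (Nat.dvd_one.1 h4)
  have hg : 0 < a.gcd b := Nat.gcd_pos_of_pos_left _ ha
  obtain ⟨a', ha'⟩ := Nat.gcd_dvd_left a b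
  obtain ⟨b', hb'⟩ := Nat.gcd_dvd_right a b
  set g := a.gcd b with hgdef
  have hab' : Nat.Coprime a' b' := by
    have : g * Nat.gcd a' b' = g * 1 := by
      rw [← Nat.gcd_mul_left, ← ha', ← hb', mul_one]
    exact Nat.eq_of_mul_eq_mul_left hg this
  have hA : a * (d * L) + b = g * (a' * (d * L) + b') := by
    conv_lhs => rw [ha', hb']
    ring
  have hcop' : Nat.Coprime (a' * (d * L) + b') (a' * M) := by
    refine Nat.Coprime.mul_right ?_ ?_
    · simpa using hab'.symm
    · rw [hA] at hcop
      exact hcop.coprime_mul_left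
  have ha'0 : 0 < a' := by
    rcases Nat.eq_zero_or_pos a' with h | h
    · simp [h] at ha'; omega
    · exact h
  obtain ⟨p, hpgt, hp, hpm⟩ := Nat.forall_exists_prime_gt_and_modEq
    (a' * (d * L) + b' + (a * N + b)) (by positivity : a' * M ≠ 0) hcop'
  obtain ⟨j, hj⟩ := (Nat.modEq_iff_dvd' (by omega)).1 hpm.symm
  have hval : a * (d * L + M * j) + b = g * p := by
    have : p = a' * (d * L) + b' + a' * M * j := by omega
    rw [this]
    conv_lhs => rw [ha', hb']
    ring
  refine ⟨d * L + M * j, ?_, ?_, p, hp, hval⟩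
  · have h5 : p ≤ g * p := Nat.le_mul_of_pos_left _ hg
    have h6 : a * N < a * (d * L + M * j) := by omega
    exact lt_of_mul_lt_mul_left h6 (Nat.zero_le a)
  · have : c * (d * L + M * j) + d = M * (d + c * j) := by
      rw [mul_add, add_right_comm, hn0]; ring
    exact ⟨_, this⟩

/-- Bounding `σ_s(cn+d)/σ_s(an+b)` below for both signs of `s`, from a common bound for
nonpositive exponents. -/
lemma exists_large_ratio {a b c d : ℕ} (ha : 0 < a) (hc : 0 < c) (h : a * d ≠ b * c) (k N : ℕ) :
    ∃ n ≥ N, 0 < n ∧ ∀ s ∈ Set.Icc (-1 : ℝ) 1,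
      (k : ℝ) ≤ sigmaR s (c * n + d) / sigmaR s (a * n + b) := by
  have hK : 0 < c * ((a * d : ℤ) - b * c).natAbs := by
    refine Nat.mul_pos hc (Int.natAbs_pos.2 (sub_ne_zero.2 ?_))
    exact_mod_cast h
  set T : ℝ := ((a.gcd b).divisors.card : ℝ) * 2 with hT
  obtain ⟨M, hM, hM1, hMB⟩ := exists_modulus hK ((a + b) * k * T)
  obtain ⟨n, hn, hdvd, p, hp, hval⟩ := exists_prime_value ha hM hM1 N
  have hn0 : 0 < n := by omega
  have hpa : 0 < a * n + b := by positivity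
  have hpc : 0 < c * n + d := by positivity
  have hcard : ((a * n + b).divisors.card : ℝ) ≤ T := by
    rw [hT, hval, Nat.divisors_mul]
    have h2 : p.divisors.card = 2 := by
      rw [hp.divisors, Finset.card_pair hp.one_lt.ne]
    have := Finset.card_mul_le (s := (a.gcd b).divisors) (t := p.divisors)
    rw [h2] at this
    exact_mod_cast this
  have hT0 : 0 ≤ T := by positivity
  have hab1 : (1 : ℝ) ≤ a + b := by
    have : (1 : ℝ) ≤ a := by exact_mod_cast ha
    have : (0 : ℝ) ≤ b := by positivity
    linarith
  have key : ∀ s : ℝ, -1 ≤ s → s ≤ 0 →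
      (a + b) * k * sigmaR s (a * n + b) ≤ sigmaR s (c * n + d) := by
    intro s h1 h0
    calc (a + b) * k * sigmaR s (a * n + b) ≤ (a + b) * k * T := by
          gcongr
          exact (sigmaR_le_card h0 _).trans hcard
      _ ≤ _ := hMB.trans (sigmaR_neg_one_le h1 hpc hdvd)
  refine ⟨n, hn.le, hn0, fun s hs => ?_⟩
  rw [le_div_iff₀ (sigmaR_pos s hpa)]
  rcases le_total s 0 with h0 | h0
  · refine le_trans ?_ (key s hs.1 h0)
    have := sigmaR_nonneg s (a * n + b)
    rw [mul_assoc]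
    exact le_mul_of_one_le_left (by positivity) hab1
  · rw [sigmaR_eq_rpow_mul s hpa, sigmaR_eq_rpow_mul s hpc]
    -- `an + b ≤ (a + b)(cn + d)`, and raising to the power `s ≤ 1` costs at most a factor `a + b`.
    have hlin : ((a * n + b : ℕ) : ℝ) ≤ (a + b) * ((c * n + d : ℕ) : ℝ) := by
      have : a * n + b ≤ (a + b) * (c * n + d) := by
        have h1 : n ≤ c * n + d := le_add_right (Nat.le_mul_of_pos_left _ hc)
        calc a * n + b ≤ (a + b) * n := by nlinarith
          _ ≤ _ := Nat.mul_le_mul_left _ h1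
      exact_mod_cast this
    have hpow : ((a * n + b : ℕ) : ℝ) ^ s ≤ (a + b) * ((c * n + d : ℕ) : ℝ) ^ s := by
      calc ((a * n + b : ℕ) : ℝ) ^ s ≤ ((a + b) * ((c * n + d : ℕ) : ℝ)) ^ s :=
            Real.rpow_le_rpow (by positivity) hlin h0
        _ = ((a : ℝ) + b) ^ s * ((c * n + d : ℕ) : ℝ) ^ s :=
            Real.mul_rpow (by positivity) (by positivity)
        _ ≤ _ := by
            gcongr
            simpa using Real.rpow_le_rpow_of_exponent_le hab1 hs.2
    have hk := key (-s) (by linarith [hs.2]) (by linarith)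
    have := sigmaR_nonneg (-s) (a * n + b)
    calc (k : ℝ) * (((a * n + b : ℕ) : ℝ) ^ s * sigmaR (-s) (a * n + b))
        ≤ k * (((a + b) * ((c * n + d : ℕ) : ℝ) ^ s) * sigmaR (-s) (a * n + b)) := by gcongr
      _ = ((c * n + d : ℕ) : ℝ) ^ s * ((a + b) * k * sigmaR (-s) (a * n + b)) := by ring
      _ ≤ _ := by gcongr

lemma exists_seq_tendsto_atTop {a b c d : ℕ} (ha : 0 < a) (hc : 0 < c) (h : a * d ≠ b * c) :
    ∃ nk : ℕ → ℕ, StrictMono nk ∧ (∀ k, 0 < nk k) ∧ ∀ s ∈ Set.Icc (-1 : ℝ) 1,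
      Tendsto (fun k => sigmaR s (c * nk k + d) / sigmaR s (a * nk k + b)) atTop atTop := by
  obtain ⟨φ, hφ, hp⟩ := extraction_forall_of_frequently
    (P := fun k n => 0 < n ∧ ∀ s ∈ Set.Icc (-1 : ℝ) 1,
      (k : ℝ) ≤ sigmaR s (c * n + d) / sigmaR s (a * n + b))
    (fun k => frequently_atTop.2 fun N => exists_large_ratio ha hc h k N)
  exact ⟨φ, hφ, fun k => (hp k).1, fun s hs =>
    tendsto_atTop_mono (fun k => (hp k).2 s hs) tendsto_natCast_atTop_atTop⟩

theorem stmt_7 (a b c d : ℕ) (ha : 0 < a) (hc : 0 < c) (habcd : a * d ≠ b * c) :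
    (∃ nk : ℕ → ℕ, StrictMono nk ∧ (∀ k, 0 < nk k) ∧
      ∀ s ∈ Set.Icc (-1 : ℝ) 1,
        Tendsto (fun k => sigmaR s (a * nk k + b) / sigmaR s (c * nk k + d))
          atTop (𝓝 0)) ∧
    (∃ mk : ℕ → ℕ, StrictMono mk ∧ (∀ k, 0 < mk k) ∧
      ∀ s ∈ Set.Icc (-1 : ℝ) 1,
        Tendsto (fun k => sigmaR s (a * mk k + b) / sigmaR s (c * mk k + d))
          atTop atTop) ∧
    (∀ s : ℝ, |s| ≤ 1 →
      Filter.liminf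
          (fun n : ℕ => ((sigmaR s (a * n + b) / sigmaR s (c * n + d) : ℝ) : EReal))
          Filter.atTop = 0 ∧
      Filter.limsup
          (fun n : ℕ => ((sigmaR s (a * n + b) / sigmaR s (c * n + d) : ℝ) : EReal))
          Filter.atTop = ⊤) := by
  obtain ⟨nk, hn1, hn2, hn3⟩ := exists_seq_tendsto_atTop ha hc habcd
  obtain ⟨mk, hm1, hm2, hm3⟩ := exists_seq_tendsto_atTop (a := c) (b := d) (c := a) (d := b) hc ha
    (by rw [mul_comm c b, mul_comm d a]; exact habcd.symm)
  have hn4 : ∀ s ∈ Set.Icc (-1 : ℝ) 1,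
      Tendsto (fun k => sigmaR s (a * nk k + b) / sigmaR s (c * nk k + d)) atTop (𝓝 0) := by
    intro s hs
    simpa [Function.comp_def] using tendsto_inv_atTop_zero.comp (hn3 s hs)
  refine ⟨⟨nk, hn1, hn2, hn4⟩, ⟨mk, hm1, hm2, hm3⟩, fun s hs => ⟨?_, ?_⟩⟩
  · have hl := hn4 s (abs_le.1 hs)
    apply le_antisymm
    · have hl' : Tendsto (fun k => ((sigmaR s (a * nk k + b) / sigmaR s (c * nk k + d) : ℝ) : EReal))
          atTop (𝓝 0) := by
        exact_mod_cast (continuous_coe_real_ereal.tendsto 0).comp hl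
      rw [← hl'.liminf_eq]
      exact liminf_le_liminf_of_le (u := fun n : ℕ =>
        ((sigmaR s (a * n + b) / sigmaR s (c * n + d) : ℝ) : EReal)) hn1.tendsto_atTop
    · refine le_liminf_of_le (by isBoundedDefault) (Eventually.of_forall fun n => ?_)
      exact_mod_cast div_nonneg (sigmaR_nonneg _ _) (sigmaR_nonneg _ _)
  · have hl := hm3 s (abs_le.1 hs)
    have hl' : Tendsto (fun k => ((sigmaR s (a * mk k + b) / sigmaR s (c * mk k + d) : ℝ) : EReal))
        atTop (𝓝 ⊤) := EReal.tendsto_coe_nhds_top_iff.2 hl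
    rw [← top_le_iff, ← hl'.limsup_eq]
    exact limsup_le_limsup_of_le (u := fun n : ℕ =>
      ((sigmaR s (a * n + b) / sigmaR s (c * n + d) : ℝ) : EReal)) hm1.tendsto_atTop
end

section
/- Let a, b, c, d be integers with a > c > 0 and b ≥ d ≥ 0. Then there exists a real number s₀ > 1 such that σ_s(an+b) > σ_s(cn+d) for all real s ≥ s₀ and all positive integers n. -/
lemma sum_inv_sq_le_two (m : ℕ) (hm : 0 < m) :
    ∑ k ∈ Finset.Icc 1 m, ((k : ℝ) ^ 2)⁻¹ ≤ 2 - (m : ℝ)⁻¹ := by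
  induction m, hm using Nat.le_induction with
  | base => norm_num
  | succ k hk ih =>
    rw [Finset.sum_Icc_succ_top (by omega)]
    have hk' : (0 : ℝ) < k := by exact_mod_cast hk
    have h : (((k + 1 : ℕ) : ℝ) ^ 2)⁻¹ ≤ (k : ℝ)⁻¹ - ((k + 1 : ℕ) : ℝ)⁻¹ := by
      push_cast
      have e : (k : ℝ)⁻¹ - ((k : ℝ) + 1)⁻¹ = ((k : ℝ) * (k + 1))⁻¹ := by
        field_simp
        ring
      rw [e]
      gcongr
      nlinarith
    linarith

/-- A crude uniform form of `σ_s(m) ≤ ζ(s) m^s`, using `ζ(s) ≤ ζ(2) ≤ 2`. -/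
lemma sigmaR_le (s : ℝ) (hs : 2 ≤ s) (m : ℕ) (hm : 0 < m) :
    sigmaR s m ≤ 2 * (m : ℝ) ^ s := by
  unfold sigmaR
  rw [← Nat.sum_div_divisors m (fun e => (e : ℝ) ^ s)]
  have h1 : ∀ e ∈ m.divisors, ((m / e : ℕ) : ℝ) ^ s ≤ ((e : ℝ) ^ 2)⁻¹ * (m : ℝ) ^ s := by
    intro e he
    have hpos : 0 < e := Nat.pos_of_mem_divisors he
    have h1e : (1 : ℝ) ≤ e := by exact_mod_cast hpos
    rw [Nat.cast_div (Nat.dvd_of_mem_divisors he) (by positivity),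
      Real.div_rpow (by positivity) (by positivity), div_eq_inv_mul]
    gcongr
    rw [← Real.rpow_natCast]
    exact Real.rpow_le_rpow_of_exponent_le h1e (by exact_mod_cast hs)
  have hsub : m.divisors ⊆ Finset.Icc 1 m := fun e he =>
    Finset.mem_Icc.2 ⟨Nat.pos_of_mem_divisors he, Nat.divisor_le he⟩
  calc _ ≤ ∑ e ∈ m.divisors, ((e : ℝ) ^ 2)⁻¹ * (m : ℝ) ^ s := Finset.sum_le_sum h1
    _ = (∑ e ∈ m.divisors, ((e : ℝ) ^ 2)⁻¹) * (m : ℝ) ^ s := by rw [Finset.sum_mul]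
    _ ≤ 2 * (m : ℝ) ^ s := by
      gcongr
      have h2 := Finset.sum_le_sum_of_subset_of_nonneg (f := fun e : ℕ => ((e : ℝ) ^ 2)⁻¹) hsub
        (fun i _ _ => by positivity)
      have h3 := sum_inv_sq_le_two m hm
      have h4 : (0 : ℝ) ≤ (m : ℝ)⁻¹ := by positivity
      linarith

lemma rpow_le_sigmaR (s : ℝ) (m : ℕ) (hm : 0 < m) : (m : ℝ) ^ s ≤ sigmaR s m :=
  Finset.single_le_sum (f := fun e : ℕ => (e : ℝ) ^ s) (fun i _ => by positivity)
    (Nat.mem_divisors_self m hm.ne')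

theorem stmt_12 (a b c d : ℕ) (hac : a > c) (hc : 0 < c) (hbd : b ≥ d) :
    ∃ s₀ : ℝ, 1 < s₀ ∧
      ∀ s : ℝ, s₀ ≤ s → ∀ n : ℕ, 0 < n →
        sigmaR s (a * n + b) > sigmaR s (c * n + d) := by
  have hk : (0 : ℝ) < (c : ℝ) + d := by positivity
  refine ⟨(c : ℝ) + d + 2, by linarith, fun s hs n hn => ?_⟩
  have hM : 0 < c * n + d := by positivity
  have hN : 0 < a * n + b := Nat.add_pos_left (Nat.mul_pos (by omega) hn) _
  have hMs : (0 : ℝ) < ((c * n + d : ℕ) : ℝ) ^ s := by positivity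
  have hle : ((c * n + d : ℕ) : ℝ) * (1 + 1 / ((c : ℝ) + d)) ≤ ((a * n + b : ℕ) : ℝ) := by
    have h1 : c * n + d + n ≤ a * n + b := by nlinarith
    have h2 : c * n + d ≤ n * (c + d) := by nlinarith
    have h1' : ((c * n + d : ℕ) : ℝ) + n ≤ ((a * n + b : ℕ) : ℝ) := by exact_mod_cast h1
    have h2' : ((c * n + d : ℕ) : ℝ) ≤ n * ((c : ℝ) + d) := by exact_mod_cast h2
    have h3 : ((c * n + d : ℕ) : ℝ) / ((c : ℝ) + d) ≤ n := (div_le_iff₀ hk).2 h2'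
    rw [mul_add, mul_one, mul_one_div]
    linarith
  have hbern : 2 < (1 + 1 / ((c : ℝ) + d)) ^ s := by
    have hp : (0 : ℝ) ≤ 1 / ((c : ℝ) + d) := by positivity
    have h := one_add_mul_self_le_rpow_one_add (s := 1 / ((c : ℝ) + d)) (by linarith)
      (p := s) (by linarith)
    have h' : 1 < s * (1 / ((c : ℝ) + d)) := by
      rw [mul_one_div, lt_div_iff₀ hk]
      linarith
    linarith
  calc sigmaR s (c * n + d) ≤ 2 * ((c * n + d : ℕ) : ℝ) ^ s := sigmaR_le s (by linarith) _ hM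
    _ < (1 + 1 / ((c : ℝ) + d)) ^ s * ((c * n + d : ℕ) : ℝ) ^ s := by gcongr
    _ = (((c * n + d : ℕ) : ℝ) * (1 + 1 / ((c : ℝ) + d))) ^ s := by
      rw [Real.mul_rpow (by positivity) (by positivity), mul_comm]
    _ ≤ ((a * n + b : ℕ) : ℝ) ^ s :=
      Real.rpow_le_rpow (by positivity) hle (by linarith)
    _ ≤ sigmaR s (a * n + b) := rpow_le_sigmaR s _ hN
end
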